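/- Let Ω and C be finite types, P a probability mass function on Ω with P ω > 0 for all ω, Q : Ω → ℝ with Q ω ≥ 0 for all ω and ∑_ω Q ω = 1, and φ : Ω → C, with fiber sums P^c, Q^c. Let T : ℕ, γ ∈ [0,1], and r_t : C → ℝ for each t ∈ {0,…,T}. Write ρ ω = Q ω/P ω and ρ^c ω = Q^c(φ ω)/P^c(φ ω). If for all t ≠ k in {0,…,T}, Cov_P(ρ^c·(r_t∘φ), ρ^c·(r_k∘φ)) ≤ Cov_P(ρ·(r_t∘φ), ρ·(r_k∘φ)), then Var_P(ω ↦ ∑_{t=0}^{T} γ^t ρ^c ω · r_t(φ ω)) ≤ Var_P(ω ↦ ∑_{t=0}^{T} γ^t ρ ω · r_t(φ ω)); i.e., the concept-based importance sampling estimator has variance at most that of the ordinary importance sampling estimator. -/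

import Mathlib

/-!
Since the rewards are functions of the concept, both estimators have the form (ratio) · `g ∘ φ` with
the single function `g c = ∑ t, γ ^ t * r t c`, and the concept-based ratio is the conditional
expectation of `Q / P` given `φ`. The means therefore agree, and the second moments compare fiber by
fiber through the Cauchy–Schwarz inequality in Sedrakyan's form,
`(∑ Q) ^ 2 / ∑ P ≤ ∑ Q ^ 2 / P`: conditioning reduces variance, which is `pvar_fiberSum_ratio_le`.
It applies to the whole discounted sum over time at once.
-/

/-- Expectation of `f` under the weight function `P` on a finite type. -/
noncomputable def pexp {Ω : Type*} [Fintype Ω] (P f : Ω → ℝ) : ℝ :=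
  ∑ ω, P ω * f ω

/-- Variance of `f` under the weight function `P` on a finite type. -/
noncomputable def pvar {Ω : Type*} [Fintype Ω] (P f : Ω → ℝ) : ℝ :=
  pexp P (fun ω => f ω ^ 2) - (pexp P f) ^ 2

/-- Covariance of `f` and `g` under the weight function `P` on a finite type. -/
noncomputable def pcov {Ω : Type*} [Fintype Ω] (P f g : Ω → ℝ) : ℝ :=
  pexp P (fun ω => f ω * g ω) - pexp P f * pexp P g

/-- Fiber sum of `h : Ω → ℝ` along `φ : Ω → C`. -/
noncomputable def fiberSum {Ω C : Type*} [Fintype Ω] [DecidableEq C]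
    (φ : Ω → C) (h : Ω → ℝ) (c : C) : ℝ :=
  ∑ ω ∈ Finset.univ.filter (fun ω => φ ω = c), h ω

/-- Pulling a concept-measurable factor out of a sum over the fibers of `φ`. -/
lemma sum_mul_comp_eq_sum_fiberSum {Ω C : Type*} [Fintype Ω] [Fintype C] [DecidableEq C]
    (φ : Ω → C) (h : Ω → ℝ) (g : C → ℝ) :
    ∑ ω, h ω * g (φ ω) = ∑ c, fiberSum φ h c * g c := by
  rw [← Finset.sum_fiberwise Finset.univ φ]
  refine Finset.sum_congr rfl fun c _ => ?_
  rw [fiberSum, Finset.sum_mul]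
  refine Finset.sum_congr rfl fun ω hω => ?_
  rw [(Finset.mem_filter.mp hω).2]

lemma pexp_ratio_mul {Ω : Type*} [Fintype Ω] (P Q f : Ω → ℝ) (hP : ∀ ω, 0 < P ω) :
    pexp P (fun ω => Q ω / P ω * f ω) = ∑ ω, Q ω * f ω := by
  refine Finset.sum_congr rfl fun ω _ => ?_
  have := (hP ω).ne'
  field_simp

/-- A fiber whose `P`-mass vanishes is empty, so its `h`-mass vanishes as well. -/
lemma fiberSum_eq_zero_of_fiberSum_eq_zero {Ω C : Type*} [Fintype Ω] [DecidableEq C]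
    (P h : Ω → ℝ) (φ : Ω → C) (hP : ∀ ω, 0 < P ω) (c : C) (hc : fiberSum φ P c = 0) :
    fiberSum φ h c = 0 := by
  have hall := (Finset.sum_eq_zero_iff_of_nonneg fun ω _ => (hP ω).le).mp hc
  exact Finset.sum_eq_zero fun ω hω => absurd (hall ω hω) (hP ω).ne'

/-- The concept-based and the state-based weights give a concept-measurable `g` the same mean. -/
lemma pexp_fiberSum_ratio_mul {Ω C : Type*} [Fintype Ω] [Fintype C] [DecidableEq C]
    (P Q : Ω → ℝ) (φ : Ω → C) (hP : ∀ ω, 0 < P ω) (g : C → ℝ) :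
    pexp P (fun ω => fiberSum φ Q (φ ω) / fiberSum φ P (φ ω) * g (φ ω)) =
      pexp P (fun ω => Q ω / P ω * g (φ ω)) := by
  rw [pexp_ratio_mul P Q (fun ω => g (φ ω)) hP, sum_mul_comp_eq_sum_fiberSum, pexp,
    sum_mul_comp_eq_sum_fiberSum φ P (fun c => fiberSum φ Q c / fiberSum φ P c * g c)]
  refine Finset.sum_congr rfl fun c _ => ?_
  by_cases hc : fiberSum φ P c = 0
  · simp [hc, fiberSum_eq_zero_of_fiberSum_eq_zero P Q φ hP c hc]
  · field_simp

/-- Conditioning on the concept does not increase the second moment. -/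
lemma pexp_fiberSum_ratio_mul_sq_le {Ω C : Type*} [Fintype Ω] [Fintype C] [DecidableEq C]
    (P Q : Ω → ℝ) (φ : Ω → C) (hP : ∀ ω, 0 < P ω) (g : C → ℝ) :
    pexp P (fun ω => (fiberSum φ Q (φ ω) / fiberSum φ P (φ ω) * g (φ ω)) ^ 2) ≤
      pexp P (fun ω => (Q ω / P ω * g (φ ω)) ^ 2) := by
  have hR : pexp P (fun ω => (Q ω / P ω * g (φ ω)) ^ 2) =
      ∑ c, fiberSum φ (fun ω => Q ω ^ 2 / P ω) c * g c ^ 2 := by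
    rw [← sum_mul_comp_eq_sum_fiberSum φ (fun ω => Q ω ^ 2 / P ω) (fun c => g c ^ 2)]
    refine Finset.sum_congr rfl fun ω _ => ?_
    have := (hP ω).ne'
    field_simp
  rw [hR, pexp,
    sum_mul_comp_eq_sum_fiberSum φ P (fun c => (fiberSum φ Q c / fiberSum φ P c * g c) ^ 2)]
  refine Finset.sum_le_sum fun c _ => ?_
  have hL : fiberSum φ P c * (fiberSum φ Q c / fiberSum φ P c * g c) ^ 2 =
      fiberSum φ Q c ^ 2 / fiberSum φ P c * g c ^ 2 := by
    by_cases hc : fiberSum φ P c = 0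
    · simp [hc]
    · field_simp
  rw [hL]
  exact mul_le_mul_of_nonneg_right
    (Finset.sq_sum_div_le_sum_sq_div _ Q fun ω _ => hP ω) (sq_nonneg _)

lemma pvar_fiberSum_ratio_le {Ω C : Type*} [Fintype Ω] [Fintype C] [DecidableEq C]
    (P Q : Ω → ℝ) (φ : Ω → C) (hP : ∀ ω, 0 < P ω) (g : C → ℝ) :
    pvar P (fun ω => fiberSum φ Q (φ ω) / fiberSum φ P (φ ω) * g (φ ω)) ≤
      pvar P (fun ω => Q ω / P ω * g (φ ω)) := by
  rw [pvar, pvar, pexp_fiberSum_ratio_mul P Q φ hP g]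
  exact sub_le_sub_right (pexp_fiberSum_ratio_mul_sq_le P Q φ hP g) _

/-- If the cross-timestep covariances of the concept-based weighted
rewards are dominated by those of the state-based weighted rewards, then the
concept-based importance sampling estimator has variance at most that of the
ordinary importance sampling estimator. -/
theorem concept_IS_var_le_of_cov_le {Ω C : Type*} [Fintype Ω] [Fintype C]
    [DecidableEq C]
    (P Q : Ω → ℝ) (φ : Ω → C)
    (hP0 : ∀ ω, 0 < P ω) (hP1 : ∑ ω, P ω = 1)
    (hQ0 : ∀ ω, 0 ≤ Q ω) (hQ1 : ∑ ω, Q ω = 1)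
    (T : ℕ) (γ : ℝ) (hγ0 : 0 ≤ γ) (hγ1 : γ ≤ 1)
    (r : ℕ → C → ℝ)
    (hcov : ∀ t k, t ≤ T → k ≤ T → t ≠ k →
      pcov P (fun ω => fiberSum φ Q (φ ω) / fiberSum φ P (φ ω) * r t (φ ω))
             (fun ω => fiberSum φ Q (φ ω) / fiberSum φ P (φ ω) * r k (φ ω)) ≤
      pcov P (fun ω => Q ω / P ω * r t (φ ω))
             (fun ω => Q ω / P ω * r k (φ ω))) :
    pvar P (fun ω => ∑ t ∈ Finset.range (T + 1),
        γ ^ t * (fiberSum φ Q (φ ω) / fiberSum φ P (φ ω)) * r t (φ ω)) ≤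
    pvar P (fun ω => ∑ t ∈ Finset.range (T + 1),
        γ ^ t * (Q ω / P ω) * r t (φ ω)) := by
  have hfac : ∀ (w : ℝ) (c : C), ∑ t ∈ Finset.range (T + 1), γ ^ t * w * r t c =
      w * ∑ t ∈ Finset.range (T + 1), γ ^ t * r t c := by
    intro w c
    rw [Finset.mul_sum]
    exact Finset.sum_congr rfl fun t _ => by ring
  simp only [hfac]
  exact pvar_fiberSum_ratio_le P Q φ hP0 fun c => ∑ t ∈ Finset.range (T + 1), γ ^ t * r t c
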